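/- Assume the standing assumptions, let β ∈ ℝ, and assume ∑_{n=0}^∞ A^n_{vw} e^{-nβ} < ∞ for all v, w ∈ V. Fix v₀ ∈ V and let ψ be a non-zero β-harmonic vector for A with ψ_{v₀} = 1 which is an extreme point of E(A,β)_{v₀}. Then there is an infinite path t = (t_i)_{i=1}^∞ in G (i.e. A_{t_i t_{i+1}} > 0 for all i) such that t₁ = v₀, t_i ≠ t_j whenever i ≠ j, and for all v ∈ V, ψ_v = lim_{k→∞} (∑_{n=0}^∞ A^n_{v t_k} e^{-nβ}) / (∑_{n=0}^∞ A^n_{v₀ t_k} e^{-nβ}). -/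

import Mathlib

open scoped ENNReal
open Filter

variable {V : Type*}

/-- The set of vertices of the graph of `A` that emit no edges or infinitely many edges. -/
def VInf (A : V → V → ℝ≥0∞) : Set V :=
  {v | {w | A v w ≠ 0} = ∅ ∨ {w | A v w ≠ 0}.Infinite}

/-- A set of vertices is hereditary if every edge with source in it has range in it. -/
def Hereditary (A : V → V → ℝ≥0∞) (H : Set V) : Prop :=
  ∀ ⦃v w : V⦄, v ∈ H → A v w ≠ 0 → w ∈ H

/-- A set of vertices is saturated if it contains every finite emitter all of whose
out-neighbours lie in it. -/
def Saturated (A : V → V → ℝ≥0∞) (H : Set V) : Prop :=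
  ∀ v : V, v ∉ VInf A → (∀ w, A v w ≠ 0 → w ∈ H) → v ∈ H

/-- `A` is cofinal if the only hereditary and saturated subsets are `∅` and `V`. -/
def Cofinal (A : V → V → ℝ≥0∞) : Prop :=
  ∀ H : Set V, Hereditary A H → Saturated A H → H = ∅ ∨ H = Set.univ

/-- Matrix powers of `A`, with entries in `[0,∞]`. -/
noncomputable def Apow [DecidableEq V] (A : V → V → ℝ≥0∞) : ℕ → V → V → ℝ≥0∞
  | 0 => fun v w => if v = w then 1 else 0
  | n + 1 => fun v w => ∑' u, A v u * Apow A n u w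

/-- `e^β` as an extended nonnegative real. -/
noncomputable def expb (β : ℝ) : ℝ≥0∞ := ENNReal.ofReal (Real.exp β)

/-- `e^{-nβ}` as an extended nonnegative real. -/
noncomputable def expn (β : ℝ) (n : ℕ) : ℝ≥0∞ := ENNReal.ofReal (Real.exp (-(n : ℝ) * β))

/-- A vector `ξ : V → [0,∞)` is almost `β`-harmonic for `A` if
`∑_w A_{vw} ξ_w = e^β ξ_v` off `V_∞` and `∑_w A_{vw} ξ_w ≤ e^β ξ_v` on `V_∞`. -/
def IsAlmostHarmonic (A : V → V → ℝ≥0∞) (β : ℝ) (ξ : V → ℝ≥0∞) : Prop :=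
  (∀ v, ξ v ≠ ⊤) ∧
  (∀ v, v ∉ VInf A → ∑' w, A v w * ξ w = expb β * ξ v) ∧
  (∀ v, v ∈ VInf A → ∑' w, A v w * ξ w ≤ expb β * ξ v)

/-- A vector `ξ : V → [0,∞)` is `β`-harmonic for `A` if `∑_w A_{vw} ξ_w = e^β ξ_v`
for every vertex `v`. -/
def IsHarmonic (A : V → V → ℝ≥0∞) (β : ℝ) (ξ : V → ℝ≥0∞) : Prop :=
  (∀ v, ξ v ≠ ⊤) ∧ ∀ v, ∑' w, A v w * ξ w = expb β * ξ v

/-- The non-wandering vertices: those admitting a loop of positive length. -/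
def NW (A : V → V → ℝ≥0∞) : Set V :=
  {v | Relation.TransGen (fun a b => A a b ≠ 0) v v}

/-- Standing assumptions i)–iii): `A` is cofinal, the graph has no sinks, the entries of
`A` are finite and all powers of `A` have finite entries. -/
def Standing [DecidableEq V] (A : V → V → ℝ≥0∞) : Prop :=
  Cofinal A ∧ (∀ v, ∃ w, A v w ≠ 0) ∧ (∀ v w, A v w ≠ ⊤) ∧
    ∀ (n : ℕ) (v w : V), Apow A n v w ≠ ⊤

/-- A function `k` supported on `V_∞` is `β`-summable when
`∑_{u ∈ V_∞} ∑_n e^{-nβ} A^n_{uu} k_u < ∞`. -/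
def BSummable [DecidableEq V] (A : V → V → ℝ≥0∞) (β : ℝ) (k : V → ℝ≥0∞) : Prop :=
  (∀ u, u ∉ VInf A → k u = 0) ∧ (∑' u, ∑' n, expn β n * Apow A n u u * k u) ≠ ⊤

/-- `k̂_v = ∑_{u ∈ V_∞} ∑_n e^{-nβ} A^n_{vu} k_u` (for `k` supported on `V_∞`). -/
noncomputable def khat [DecidableEq V] (A : V → V → ℝ≥0∞) (β : ℝ) (k : V → ℝ≥0∞) (v : V) :
    ℝ≥0∞ :=
  ∑' u, ∑' n, expn β n * Apow A n v u * k u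

/-- The first-return quantities `r_{vw}(n)`: `r_{vw}(0) = 0`, `r_{vw}(1) = A_{vw}` and
`r_{vw}(n+1) = ∑_{u ≠ w} A_{vu} r_{uw}(n)` for `n ≥ 1`. -/
noncomputable def fr [DecidableEq V] (A : V → V → ℝ≥0∞) (w : V) : ℕ → V → ℝ≥0∞
  | 0 => fun _ => 0
  | 1 => fun v => A v w
  | n + 2 => fun v => ∑' u, if u = w then 0 else A v u * fr A w (n + 1) u

/-!
For `B = e^{-β} A` the Green kernel `G = ∑_n B^n` is finite, and an extreme `ψ` is a minimal
harmonic vector. By minimality the reduced vector of `ψ` on a set `C` is either `ψ` itself or has no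
harmonic part, in which case `C` is negligible at infinity. If `G(u, ·) / G(v, ·)` stays below
`ψ u / ψ v` by a definite amount on `C`, then so does the ratio of the reduced vectors on `C` at `u`
and `v`, as these are limits of potentials of charges on `C`; hence the first alternative fails for
`C`. So the Green quotients converge to those of `ψ` along the filter of complements of negligible
sets. This filter is not carried by a single path, but for a decreasing sequence of its members a
path ending up in each of them is built greedily: as long as `ψ` exceeds its reduced vector on the
negligible complement, the path can be continued without entering that complement, and at some
point it can be continued past the next one. Since single vertices are negligible, the path can be
made to visit each vertex finitely often, and deleting its loops makes it injective.
-/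

/-- The action `(B f)_v = ∑_w B_{vw} f_w` of a non-negative matrix on non-negative vectors. -/
noncomputable def matOp (B : V → V → ℝ≥0∞) : Module.End ℝ≥0∞ (V → ℝ≥0∞) where
  toFun f v := ∑' w, B v w * f w
  map_add' f g := by ext v; simp [mul_add, ENNReal.tsum_add]
  map_smul' c f := by ext v; simp [mul_left_comm _ c, ENNReal.tsum_mul_left]

theorem map_tsub_of_ne_top {ι κ F : Type*} [FunLike F (ι → ℝ≥0∞) (κ → ℝ≥0∞)]
    [AddHomClass F (ι → ℝ≥0∞) (κ → ℝ≥0∞)] (T : F) {f g : ι → ℝ≥0∞} (hgf : g ≤ f)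
    (hg : ∀ k, T g k ≠ ⊤) : T (f - g) = T f - T g := by
  have hadd : T f = T (f - g) + T g := by rw [← map_add, tsub_add_cancel_of_le hgf]
  ext k
  simp [hadd, ENNReal.add_sub_cancel_right (hg k)]

section MatOp

variable {B : V → V → ℝ≥0∞}

theorem matOp_apply (f : V → ℝ≥0∞) (v : V) : matOp B f v = ∑' w, B v w * f w := rfl

theorem matOp_smul_matrix (c : ℝ≥0∞) : matOp (c • B) = c • matOp B := by
  ext f v
  simp [matOp_apply, mul_assoc, ENNReal.tsum_mul_left]

theorem matOp_apply_le {f g : V → ℝ≥0∞} {v : V} (h : ∀ w, B v w ≠ 0 → f w ≤ g w) :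
    matOp B f v ≤ matOp B g v := by
  refine ENNReal.tsum_le_tsum fun w => ?_
  rcases eq_or_ne (B v w) 0 with hw | hw
  · simp [hw]
  · exact mul_le_mul_right (h w hw) _

theorem matOp_mono : Monotone (matOp B) := fun _ _ h _ => matOp_apply_le fun w _ => h w

theorem pow_matOp_mono (n : ℕ) : Monotone (matOp B ^ n) := by
  rw [Module.End.coe_pow]
  exact matOp_mono.iterate n

theorem pow_matOp_antitone {f : V → ℝ≥0∞} (hf : matOp B f ≤ f) :
    Antitone fun n => (matOp B ^ n) f :=
  antitone_nat_of_succ_le fun n => by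
    rw [pow_succ, Module.End.mul_apply]
    exact pow_matOp_mono n hf

theorem pow_matOp_eq_self {f : V → ℝ≥0∞} (hf : matOp B f = f) (n : ℕ) : (matOp B ^ n) f = f := by
  rw [Module.End.coe_pow]
  exact Function.iterate_fixed hf n

theorem pow_matOp_tsum {ι : Type*} (n : ℕ) (f : ι → V → ℝ≥0∞) :
    (matOp B ^ n) (fun v => ∑' i, f i v) = fun v => ∑' i, (matOp B ^ n) (f i) v := by
  induction n with
  | zero => rfl
  | succ n ih =>
    ext v
    simp only [pow_succ', Module.End.mul_apply, ih, matOp_apply, ← ENNReal.tsum_mul_left]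
    exact ENNReal.tsum_comm

theorem matOp_iSup {ι : Type*} [Preorder ι] [IsDirectedOrder ι] {f : ι → V → ℝ≥0∞}
    (hf : Monotone f) : matOp B (⨆ i, f i) = ⨆ i, matOp B (f i) := by
  ext v
  simp only [matOp_apply, ENNReal.tsum_eq_iSup_sum, iSup_apply, ENNReal.mul_iSup]
  rw [iSup_comm]
  exact iSup_congr fun s => ENNReal.finsetSum_iSup_of_monotone fun w i j hij =>
    mul_le_mul_right (hf hij w) (B v w)

theorem matOp_iInf {f : ℕ → V → ℝ≥0∞} (hf : Antitone f) (hfin : ∀ v, matOp B (f 0) v ≠ ⊤) :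
    matOp B (⨅ n, f n) = ⨅ n, matOp B (f n) := by
  let _ : MeasurableSpace V := ⊤
  ext v
  have hmul : ∀ w, B v w * ⨅ n, f n w = ⨅ n, B v w * f n w := fun w =>
    ENNReal.mul_iInf' (fun hB _ => ⟨0, of_not_not fun h0 =>
      ENNReal.ne_top_of_tsum_ne_top (hfin v) w (by rw [hB, ENNReal.top_mul h0])⟩) fun _ => ⟨0⟩
  simp only [matOp_apply, iInf_apply, hmul, ← MeasureTheory.lintegral_count]
  refine MeasureTheory.lintegral_iInf (fun _ => measurable_from_top)
    (fun m n hmn w => mul_le_mul_right (hf hmn w) _) ?_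
  rw [MeasureTheory.lintegral_count]
  exact hfin v

end MatOp

/-- The potential `∑_n B^n f` of a non-negative vector `f`. -/
noncomputable def potential (B : V → V → ℝ≥0∞) (f : V → ℝ≥0∞) (v : V) : ℝ≥0∞ :=
  ∑' n : ℕ, (matOp B ^ n) f v

/-- The Green kernel `∑_n B^n_{vw}`, whose columns are the potentials of the unit vectors. -/
noncomputable def green [DecidableEq V] (B : V → V → ℝ≥0∞) (v w : V) : ℝ≥0∞ :=
  potential B (Pi.single w 1) v

section Potential

variable {B : V → V → ℝ≥0∞} {f : V → ℝ≥0∞}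

theorem le_potential : f ≤ potential B f := fun v =>
  ENNReal.le_tsum (f := fun n => (matOp B ^ n) f v) 0

theorem pow_matOp_potential (n : ℕ) (v : V) :
    (matOp B ^ n) (potential B f) v = ∑' k, (matOp B ^ (k + n)) f v := by
  change (matOp B ^ n) (fun u => ∑' k, (matOp B ^ k) f u) v = _
  simp only [pow_matOp_tsum, ← Module.End.mul_apply, ← pow_add, add_comm n]

theorem matOp_potential_le : matOp B (potential B f) ≤ potential B f := fun v => by
  rw [← pow_one (matOp B), pow_matOp_potential]
  exact ENNReal.tsum_comp_le_tsum_of_injective (add_left_injective 1)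
    fun k => (matOp B ^ k) f v

theorem tendsto_pow_matOp_potential {v : V} (h : potential B f v ≠ ⊤) :
    Tendsto (fun n => (matOp B ^ n) (potential B f) v) atTop (nhds 0) := by
  simp only [pow_matOp_potential]
  exact ENNReal.tendsto_sum_nat_add _ h

theorem potential_sub_matOp {v : V} (hf : matOp B f ≤ f)
    (h0 : Tendsto (fun n => (matOp B ^ n) f v) atTop (nhds 0)) :
    potential B (f - matOp B f) v = f v := by
  have htele : ∀ n, ∑ k ∈ Finset.range n, (matOp B ^ k) (f - matOp B f) v
      + (matOp B ^ n) f v = f v := by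
    intro n
    induction n with
    | zero => simp
    | succ n ih =>
      rw [Finset.sum_range_succ, add_assoc, ← Pi.add_apply, pow_succ, Module.End.mul_apply,
        ← map_add, tsub_add_cancel_of_le hf, ih]
  have hlim := (ENNReal.tendsto_nat_tsum fun k => (matOp B ^ k) (f - matOp B f) v).add h0
  simp only [htele, add_zero] at hlim
  exact tendsto_nhds_unique hlim tendsto_const_nhds

theorem potential_eq_tsum_green [DecidableEq V] (f : V → ℝ≥0∞) (v : V) :
    potential B f v = ∑' w, green B v w * f w := by
  have hf : f = fun u => ∑' w, (f w • Pi.single w (1 : ℝ≥0∞) : V → ℝ≥0∞) u := by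
    ext u
    rw [tsum_eq_single u fun w hw => by simp [hw.symm]]
    simp
  simp only [potential, green, ← ENNReal.tsum_mul_right]
  rw [ENNReal.tsum_comm]
  refine tsum_congr fun n => ?_
  conv_lhs => rw [hf, pow_matOp_tsum]
  simp only [map_smul, Pi.smul_apply, smul_eq_mul, mul_comm]

end Potential

/-- The reduced vector of `ψ` on `C`: the least superharmonic vector dominating `ψ` on `C`. -/
noncomputable def reduced (B : V → V → ℝ≥0∞) (ψ : V → ℝ≥0∞) (C : Set V) : V → ℝ≥0∞ :=
  sInf {s | matOp B s ≤ s ∧ ∀ v ∈ C, ψ v ≤ s v}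

section Reduced

variable {B : V → V → ℝ≥0∞} {ψ : V → ℝ≥0∞} {C D : Set V}

theorem reduced_le {s : V → ℝ≥0∞} (hs : matOp B s ≤ s) (hC : ∀ v ∈ C, ψ v ≤ s v) :
    reduced B ψ C ≤ s := sInf_le ⟨hs, hC⟩

theorem le_reduced {v : V} (hv : v ∈ C) : ψ v ≤ reduced B ψ C v := by
  rw [reduced, sInf_apply]
  exact le_iInf fun s => s.2.2 v hv

theorem matOp_reduced_le (C : Set V) : matOp B (reduced B ψ C) ≤ reduced B ψ C :=
  le_sInf fun _ hs => (matOp_mono (sInf_le hs)).trans hs.1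

theorem matOp_reduced_of_notMem {v : V} (hv : v ∉ C) :
    matOp B (reduced B ψ C) v = reduced B ψ C v := by
  classical
  set r := reduced B ψ C
  have hr : matOp B r ≤ r := matOp_reduced_le C
  -- Replacing `r` by `B r` off `C` keeps it superharmonic, so minimality of `r` forces `r ≤ B r`.
  let s := C.piecewise r (matOp B r)
  have hsr : s ≤ r := Set.piecewise_le (fun _ _ => le_rfl) fun u _ => hr u
  have hrs : matOp B r ≤ s := Set.le_piecewise (fun u _ => hr u) fun _ _ => le_rfl
  have hCs : ∀ u ∈ C, ψ u ≤ s u := fun u hu => by simpa [s, hu] using le_reduced hu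
  have hle := reduced_le ((matOp_mono hsr).trans hrs) hCs v
  have hsv : s v = matOp B r v := Set.piecewise_eq_of_notMem _ _ _ hv
  exact (hr v).antisymm (hsv ▸ hle)

theorem reduced_le_self (hψ : matOp B ψ ≤ ψ) (C : Set V) : reduced B ψ C ≤ ψ :=
  reduced_le hψ fun _ _ => le_rfl

theorem reduced_mono (h : C ⊆ D) : reduced B ψ C ≤ reduced B ψ D :=
  reduced_le (matOp_reduced_le D) fun _ hv => le_reduced (h hv)

theorem reduced_empty : reduced B ψ ∅ = 0 :=
  le_antisymm (reduced_le (map_zero _).le fun _ hv => hv.elim) zero_le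

theorem reduced_union_le (C D : Set V) :
    reduced B ψ (C ∪ D) ≤ reduced B ψ C + reduced B ψ D := by
  refine reduced_le ?_ ?_
  · rw [map_add]
    exact add_le_add (matOp_reduced_le C) (matOp_reduced_le D)
  · rintro v (hv | hv)
    · exact (le_reduced hv).trans le_self_add
    · exact (le_reduced hv).trans le_add_self

theorem reduced_iUnion_of_monotone {ι : Type*} [Preorder ι] [IsDirectedOrder ι] {C : ι → Set V}
    (hC : Monotone C) : reduced B ψ (⋃ i, C i) = ⨆ i, reduced B ψ (C i) := by
  refine le_antisymm (reduced_le ?_ ?_) (iSup_le fun i => reduced_mono (Set.subset_iUnion C i))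
  · rw [matOp_iSup fun i j h => reduced_mono (hC h)]
    exact iSup_mono fun i => matOp_reduced_le (C i)
  · intro v hv
    obtain ⟨i, hi⟩ := Set.mem_iUnion.1 hv
    exact (le_reduced hi).trans (le_iSup (fun i => reduced B ψ (C i)) i v)

theorem reduced_le_inv_smul_tsub (hψ : matOp B ψ = ψ) (hfin : ∀ v, ψ v ≠ ⊤) {c : ℝ≥0∞}
    (hc1 : c < 1) (hc : c • ψ ≤ reduced B ψ C) :
    reduced B ψ C ≤ (1 - c)⁻¹ • (reduced B ψ C - c • ψ) := by
  have hcfin : ∀ v, (c • ψ) v ≠ ⊤ := fun v => ENNReal.mul_ne_top hc1.ne_top (hfin v)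
  have hcψ : matOp B (c • ψ) = c • ψ := by rw [map_smul, hψ]
  refine reduced_le ?_ fun v hv => ?_
  · rw [map_smul, map_tsub_of_ne_top _ hc (by rwa [hcψ]), hcψ]
    exact smul_le_smul_of_nonneg_left (tsub_le_tsub_right (matOp_reduced_le C) _) zero_le
  · calc ψ v = (1 - c)⁻¹ * ((1 - c) * ψ v) := by
          rw [← mul_assoc, ENNReal.inv_mul_cancel (tsub_pos_of_lt hc1).ne' (by finiteness), one_mul]
      _ = (1 - c)⁻¹ * (ψ v - c * ψ v) := by rw [ENNReal.sub_mul fun _ _ => hfin v, one_mul]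
      _ ≤ (1 - c)⁻¹ * (reduced B ψ C v - c * ψ v) := by gcongr; exact le_reduced hv

end Reduced

/-- A set `C` is negligible at infinity if the reduced vector of `ψ` on `C` has no harmonic
part, that is, if the iterates of `B` on it tend to zero. -/
def NegligibleAtInfinity (B : V → V → ℝ≥0∞) (ψ : V → ℝ≥0∞) (C : Set V) : Prop :=
  ∀ v, Tendsto (fun n => (matOp B ^ n) (reduced B ψ C) v) atTop (nhds 0)

section Negligible

variable {B : V → V → ℝ≥0∞} {ψ : V → ℝ≥0∞} {C D : Set V}

theorem negligibleAtInfinity_of_reduced_le {s : V → ℝ≥0∞} (h : reduced B ψ C ≤ s)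
    (hs : ∀ v, Tendsto (fun n => (matOp B ^ n) s v) atTop (nhds 0)) :
    NegligibleAtInfinity B ψ C := fun v =>
  tendsto_of_tendsto_of_tendsto_of_le_of_le tendsto_const_nhds (hs v) (fun _ => zero_le)
    fun n => pow_matOp_mono n h v

theorem negligibleAtInfinity_empty : NegligibleAtInfinity B ψ ∅ := fun v => by
  simp [reduced_empty]

theorem NegligibleAtInfinity.mono (hD : NegligibleAtInfinity B ψ D) (h : C ⊆ D) :
    NegligibleAtInfinity B ψ C :=
  negligibleAtInfinity_of_reduced_le (reduced_mono h) hD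

theorem NegligibleAtInfinity.union (hC : NegligibleAtInfinity B ψ C)
    (hD : NegligibleAtInfinity B ψ D) : NegligibleAtInfinity B ψ (C ∪ D) :=
  negligibleAtInfinity_of_reduced_le (reduced_union_le C D) fun v => by
    simpa using (hC v).add (hD v)

theorem negligibleAtInfinity_singleton [DecidableEq V] {w : V} (hw : ψ w ≠ ⊤)
    (hgreen : ∀ v, green B v w ≠ ⊤) : NegligibleAtInfinity B ψ {w} := by
  have hle : reduced B ψ {w} ≤ ψ w • potential B (Pi.single w 1) := by
    refine reduced_le ?_ ?_
    · rw [map_smul]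
      exact smul_le_smul_of_nonneg_left matOp_potential_le zero_le
    · rintro v rfl
      simpa using mul_le_mul_right (le_potential (B := B) (f := Pi.single v 1) v) (ψ v)
  refine negligibleAtInfinity_of_reduced_le hle fun v => ?_
  simpa using ENNReal.Tendsto.const_mul (tendsto_pow_matOp_potential (hgreen v)) (Or.inr hw)

end Negligible

/-- The filter of complements of the sets that are negligible at infinity: the neighbourhoods,
in the fine topology, of the boundary part that carries `ψ`. -/
def fineFilter (B : V → V → ℝ≥0∞) (ψ : V → ℝ≥0∞) : Filter V where
  sets := {U | NegligibleAtInfinity B ψ Uᶜ}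
  univ_sets := by simpa using negligibleAtInfinity_empty
  sets_of_superset hU h := NegligibleAtInfinity.mono hU (Set.compl_subset_compl.2 h)
  inter_sets hU hU' := by
    rw [Set.mem_ofPred_eq, Set.compl_inter]
    exact NegligibleAtInfinity.union hU hU'

section FineFilter

variable {B : V → V → ℝ≥0∞} {ψ : V → ℝ≥0∞}

theorem mem_fineFilter {U : Set V} : U ∈ fineFilter B ψ ↔ NegligibleAtInfinity B ψ Uᶜ := Iff.rfl

theorem fineFilter_le_cofinite [DecidableEq V] (hfin : ∀ v, ψ v ≠ ⊤)
    (hgreen : ∀ v w, green B v w ≠ ⊤) : fineFilter B ψ ≤ cofinite :=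
  le_cofinite_iff_compl_singleton_mem.2 fun w => by
    rw [mem_fineFilter, compl_compl]
    exact negligibleAtInfinity_singleton (hfin w) fun v => hgreen v w

theorem negligibleAtInfinity_of_finite [DecidableEq V] (hfin : ∀ v, ψ v ≠ ⊤)
    (hgreen : ∀ v w, green B v w ≠ ⊤) {C : Set V} (hC : C.Finite) :
    NegligibleAtInfinity B ψ C := by
  simpa only [mem_fineFilter, compl_compl] using
    fineFilter_le_cofinite hfin hgreen hC.compl_mem_cofinite

/-- On a finite set the reduced vector is the potential of a charge carried by that set; the
general case follows by exhaustion. -/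
theorem mul_reduced_le_mul_reduced [DecidableEq V] (hfin : ∀ v, ψ v ≠ ⊤)
    (hgreen : ∀ v w, green B v w ≠ ⊤) {C : Set V} {a b : ℝ≥0∞} {u v : V}
    (h : ∀ w ∈ C, a * green B u w ≤ b * green B v w) :
    a * reduced B ψ C u ≤ b * reduced B ψ C v := by
  let F : Finset V → Set V := fun s => C ∩ s
  have hF : Monotone F := fun s t hst => Set.inter_subset_inter_right C (Finset.coe_subset.2 hst)
  have hFC : ⋃ s, F s = C := by
    rw [← Set.inter_iUnion, Set.iUnion_eq_univ_iff.2 fun w => ⟨{w}, by simp⟩, Set.inter_univ]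
  have hRiesz : ∀ s x, reduced B ψ (F s) x = ∑' w, green B x w *
      (reduced B ψ (F s) w - matOp B (reduced B ψ (F s)) w) := fun s x => by
    rw [← potential_sub_matOp (matOp_reduced_le _) (negligibleAtInfinity_of_finite hfin hgreen
      (s.finite_toSet.inter_of_right C) x), potential_eq_tsum_green]
    rfl
  simp only [← hFC, reduced_iUnion_of_monotone hF, iSup_apply, ENNReal.mul_iSup]
  refine iSup_mono fun s => ?_
  rw [hRiesz s u, hRiesz s v, ← ENNReal.tsum_mul_left, ← ENNReal.tsum_mul_left]
  refine ENNReal.tsum_le_tsum fun w => ?_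
  by_cases hw : w ∈ F s
  · rw [← mul_assoc, ← mul_assoc]
    exact mul_le_mul_left (h w hw.1) _
  · simp [matOp_reduced_of_notMem hw]

end FineFilter

/-- A finite harmonic vector is minimal if it dominates no other harmonic vectors than its own
multiples: it is zero or spans an extreme ray of the harmonic cone. -/
structure IsMinimalHarmonic (B : V → V → ℝ≥0∞) (ψ : V → ℝ≥0∞) : Prop where
  matOp_eq : matOp B ψ = ψ
  ne_top : ∀ v, ψ v ≠ ⊤
  exists_eq_smul : ∀ h : V → ℝ≥0∞, matOp B h = h → h ≤ ψ → ∃ c : ℝ≥0∞, h = c • ψ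

namespace IsMinimalHarmonic

variable {B : V → V → ℝ≥0∞} {ψ : V → ℝ≥0∞}

theorem exists_tendsto_pow_matOp (hψ : IsMinimalHarmonic B ψ) {r : V → ℝ≥0∞}
    (hr : matOp B r ≤ r) (hrψ : r ≤ ψ) :
    ∃ c : ℝ≥0∞, c • ψ ≤ r ∧
      ∀ v, Tendsto (fun n => (matOp B ^ n) r v) atTop (nhds (c * ψ v)) := by
  have hanti := pow_matOp_antitone hr
  have hharm : matOp B (⨅ n, (matOp B ^ n) r) = ⨅ n, (matOp B ^ n) r := by
    have hfin : ∀ v, matOp B ((matOp B ^ 0) r) v ≠ ⊤ := fun v =>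
      ne_top_of_le_ne_top (hψ.ne_top v) ((hr.trans hrψ) v)
    rw [matOp_iInf hanti hfin]
    simp only [← Module.End.mul_apply, ← pow_succ']
    exact hanti.iInf_nat_add 1
  have hle : ⨅ n, (matOp B ^ n) r ≤ r := iInf_le (fun n => (matOp B ^ n) r) 0
  obtain ⟨c, hc⟩ := hψ.exists_eq_smul _ hharm (hle.trans hrψ)
  refine ⟨c, hc ▸ hle, fun v => ?_⟩
  have hcv : c * ψ v = ⨅ n, (matOp B ^ n) r v := by
    rw [← iInf_apply, hc, Pi.smul_apply, smul_eq_mul]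
  exact hcv ▸ tendsto_atTop_iInf fun m n hmn => hanti hmn v

/-- A zero-one law: if `B^n R` tends to `c ψ` with `c < 1`, where `R` is the reduced vector, then
`(R - c ψ) / (1 - c)` competes with `R` and has vanishing iterates, hence `c = 0`. -/
theorem negligible_or_reduced_eq (hψ : IsMinimalHarmonic B ψ) (C : Set V) :
    NegligibleAtInfinity B ψ C ∨ reduced B ψ C = ψ := by
  have hR := reduced_le_self hψ.matOp_eq.le C
  obtain ⟨c, hc, hlim⟩ := hψ.exists_tendsto_pow_matOp (matOp_reduced_le C) hR
  rcases lt_or_ge c 1 with hc1 | hc1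
  · refine .inl (negligibleAtInfinity_of_reduced_le
      (reduced_le_inv_smul_tsub hψ.matOp_eq hψ.ne_top hc1 hc) fun v => ?_)
    have hpow : ∀ n, (matOp B ^ n) (c • ψ) = c • ψ := pow_matOp_eq_self (by
      rw [map_smul, hψ.matOp_eq])
    have hcfin : ∀ v, (c • ψ) v ≠ ⊤ := fun v => ENNReal.mul_ne_top hc1.ne_top (hψ.ne_top v)
    have hsub : ∀ n, (matOp B ^ n) (reduced B ψ C - c • ψ) v =
        (matOp B ^ n) (reduced B ψ C) v - c * ψ v := fun n => by
      rw [map_tsub_of_ne_top _ hc (by rwa [hpow]), hpow]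
      rfl
    have h0 := ENNReal.Tendsto.sub (hlim v) (tendsto_const_nhds (x := c * ψ v)) (.inl (hcfin v))
    rw [tsub_self] at h0
    simpa [hsub] using ENNReal.Tendsto.const_mul h0
      (Or.inr (ENNReal.inv_ne_top.2 (tsub_pos_of_lt hc1).ne'))
  · exact .inr (hR.antisymm (le_trans (fun v => le_mul_of_one_le_left' hc1) hc))

theorem tendsto_green_div [DecidableEq V] (hψ : IsMinimalHarmonic B ψ)
    (hgreen : ∀ v w, green B v w ≠ ⊤) (u v : V) (hu : ψ u ≠ 0) :
    Tendsto (fun w => green B v w / green B u w) (fineFilter B ψ) (nhds (ψ v / ψ u)) := by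
  refine tendsto_order.2 ⟨fun a ha => ?_, fun a ha => ?_⟩
  · have hatop : a ≠ ⊤ := ha.ne_top
    rw [ENNReal.lt_div_iff_mul_lt (.inl hu) (.inl (hψ.ne_top u))] at ha
    refine (hψ.negligible_or_reduced_eq _).resolve_right fun hR => ha.not_ge ?_
    have h := mul_reduced_le_mul_reduced (a := 1) (b := a) (u := v) (v := u) hψ.ne_top hgreen
      (C := {w | a < green B v w / green B u w}ᶜ) fun w hw => ?_
    · rwa [hR, one_mul] at h
    · rw [one_mul]
      by_contra! hlt
      exact hw ((ENNReal.lt_div_iff_mul_lt (.inr hatop) (.inl (hgreen u w))).2 hlt)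
  · refine (hψ.negligible_or_reduced_eq _).resolve_right fun hR => ha.not_ge ?_
    have h := mul_reduced_le_mul_reduced (a := a) (b := 1) (u := u) (v := v) hψ.ne_top hgreen
      (C := {w | green B v w / green B u w < a}ᶜ) fun w hw => ?_
    · rw [hR, one_mul] at h
      exact (ENNReal.le_div_iff_mul_le (.inl hu) (.inl (hψ.ne_top u))).2 h
    · rw [one_mul]
      exact ENNReal.mul_le_of_le_div (not_lt.1 hw)

end IsMinimalHarmonic

section Walk

/-- The edges of the graph of `B` that do not start in `D`. The `k`-th iterate of `preimage` along
this relation sends `S` to the vertices with a walk of length `k` to `S` that stays off `D` until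
its last step. -/
def avoidingEdges (B : V → V → ℝ≥0∞) (D : Set V) : SetRel V V := {p | p.1 ∉ D ∧ B p.1 p.2 ≠ 0}

variable {B : V → V → ℝ≥0∞} {ψ : V → ℝ≥0∞}

theorem exists_edge_reduced_lt (hψ : matOp B ψ = ψ) {D : Set V} {x : V}
    (hx : reduced B ψ D x < ψ x) :
    ∃ z, (x, z) ∈ avoidingEdges B D ∧ reduced B ψ D z < ψ z := by
  have hxD : x ∉ D := fun h => (le_reduced h).not_gt hx
  by_contra! h
  refine hx.not_ge ?_
  rw [← congrFun hψ x, ← matOp_reduced_of_notMem hxD]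
  exact matOp_apply_le fun z hz => h z ⟨hxD, hz⟩

/-- On the vertices with no such walk, `ψ ≤ R + B^n R'` for all `n`, where `R` and `R'` are the
reduced vectors on `D` and `D'`; the remainder `B^n R'` vanishes, so `R = ψ` there. -/
theorem exists_mem_iterate_preimage_avoidingEdges (hψ : matOp B ψ = ψ) {D D' : Set V}
    (hD' : NegligibleAtInfinity B ψ D') {x : V} (hx : reduced B ψ D x < ψ x) :
    ∃ k, x ∈ (avoidingEdges B D).preimage^[k + 1] {y | reduced B ψ D' y < ψ y} := by
  set S := {y | reduced B ψ D' y < ψ y}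
  obtain ⟨z, hxz, hz⟩ := exists_edge_reduced_lt hψ hx
  by_contra! hxS
  have hbound : ∀ n y, (∀ k, y ∉ (avoidingEdges B D).preimage^[k] S) →
      ψ y ≤ (reduced B ψ D + (matOp B ^ n) (reduced B ψ D')) y := by
    intro n
    induction n with
    | zero => exact fun y hy => (not_lt.1 (hy 0)).trans le_add_self
    | succ n ih =>
      intro y hy
      by_cases hyD : y ∈ D
      · exact (le_reduced hyD).trans le_self_add
      · rw [pow_succ', Module.End.mul_apply, Pi.add_apply, ← matOp_reduced_of_notMem hyD,
          ← Pi.add_apply, ← map_add, ← congrFun hψ y]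
        refine matOp_apply_le fun w hw => ih w fun k hk => hy (k + 1) ?_
        rw [Function.iterate_succ_apply']
        exact ⟨w, hk, hyD, hw⟩
  have hzS : ∀ k, z ∉ (avoidingEdges B D).preimage^[k] S := fun k hk => hxS k (by
    rw [Function.iterate_succ_apply']
    exact ⟨z, hk, hxz⟩)
  have hlim := (hD' z).const_add (reduced B ψ D z)
  rw [add_zero] at hlim
  exact hz.not_ge (ge_of_tendsto' hlim fun n => hbound n z hzS)

theorem tendsto_atTop_of_step {a b : ℕ → ℕ}
    (h : ∀ i, a (i + 1) = a i + 1 ∨ a (i + 1) = a i ∧ b (i + 1) < b i) :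
    Tendsto a atTop atTop := by
  have hmono : Monotone a := monotone_nat_of_le_succ fun i => by
    rcases h i with h | h <;> omega
  have hgrow : ∀ m i, b i ≤ m → ∃ j, a i < a j := by
    intro m
    induction m with
    | zero => exact fun i hi => ⟨i + 1, by rcases h i with h | h <;> omega⟩
    | succ m ih =>
      intro i hi
      rcases h i with h | ⟨heq, hlt⟩
      · exact ⟨i + 1, by omega⟩
      · exact heq ▸ ih (i + 1) (by omega)
  refine tendsto_atTop_atTop_of_monotone hmono fun n => ?_
  induction n with
  | zero => exact ⟨0, Nat.zero_le _⟩
  | succ n ih =>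
    obtain ⟨i, hi⟩ := ih
    obtain ⟨j, hj⟩ := hgrow _ i le_rfl
    exact ⟨j, by omega⟩

/-- The walk is a state machine: at a vertex of `Q n` it adopts a path to `Q (n + 1)`, and `s`
records the current stage `n`. -/
theorem exists_walk_of_iterate_preimage {α : Type*} {R : ℕ → SetRel α α} {Q : ℕ → Set α}
    (hQ : ∀ n, ∀ x ∈ Q n, ∃ k, x ∈ (R n).preimage^[k + 1] (Q (n + 1))) {x₀ : α} (hx₀ : x₀ ∈ Q 0) :
    ∃ (t : ℕ → α) (s : ℕ → ℕ), t 0 = x₀ ∧ Tendsto s atTop atTop ∧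
      ∀ i, (t i, t (i + 1)) ∈ R (s i) := by
  let State := {p : ℕ × ℕ × α // p.2.2 ∈ (R p.1).preimage^[p.2.1 + 1] (Q (p.1 + 1))}
  have hstep : ∀ p : State, ∃ q : State, (p.1.2.2, q.1.2.2) ∈ R p.1.1 ∧
      (q.1.1 = p.1.1 + 1 ∨ q.1.1 = p.1.1 ∧ q.1.2.1 < p.1.2.1) := by
    rintro ⟨⟨n, k, x⟩, hx⟩
    rw [Function.iterate_succ_apply'] at hx
    obtain ⟨y, hy, hxy⟩ := hx
    cases k with
    | zero =>
      obtain ⟨k, hk⟩ := hQ (n + 1) y hy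
      exact ⟨⟨⟨n + 1, k, y⟩, hk⟩, hxy, .inl rfl⟩
    | succ k => exact ⟨⟨⟨n, k, y⟩, hy⟩, hxy, .inr ⟨rfl, k.lt_succ_self⟩⟩
  choose next hnext using hstep
  obtain ⟨k, hk⟩ := hQ 0 x₀ hx₀
  let p : ℕ → State := fun i => next^[i] ⟨⟨0, k, x₀⟩, hk⟩
  have hp : ∀ i, p (i + 1) = next (p i) := fun i => Function.iterate_succ_apply' _ _ _
  refine ⟨fun i => (p i).1.2.2, fun i => (p i).1.1, rfl,
    tendsto_atTop_of_step (b := fun i => (p i).1.2.1) fun i => ?_, fun i => ?_⟩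
  · simpa only [hp] using (hnext (p i)).2
  · simpa only [hp] using (hnext (p i)).1

theorem exists_walk_tendsto (hψ : matOp B ψ = ψ) {l : Filter V} [l.IsCountablyGenerated]
    (hl : fineFilter B ψ ≤ l) {x₀ : V} (hx₀ : ψ x₀ ≠ 0) :
    ∃ t : ℕ → V, t 0 = x₀ ∧ (∀ i, B (t i) (t (i + 1)) ≠ 0) ∧ Tendsto t atTop l := by
  obtain ⟨U, hU⟩ := l.exists_antitone_basis
  let D : ℕ → Set V := fun n => (⋂ i ∈ Set.Iio n, U i)ᶜ
  have hD : ∀ n, NegligibleAtInfinity B ψ (D n) := fun n =>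
    mem_fineFilter.1 (hl ((biInter_mem (Set.finite_Iio n)).2 fun i _ => hU.mem i))
  have hQ : ∀ n, ∀ x ∈ {y | reduced B ψ (D n) y < ψ y}, ∃ k,
      x ∈ (avoidingEdges B (D n)).preimage^[k + 1] {y | reduced B ψ (D (n + 1)) y < ψ y} :=
    fun n x hx => exists_mem_iterate_preimage_avoidingEdges hψ (hD (n + 1)) hx
  have hD0 : D 0 = ∅ := by simp [D]
  obtain ⟨t, s, ht0, hs, ht⟩ := exists_walk_of_iterate_preimage hQ (x₀ := x₀) (by
    simpa [hD0, reduced_empty] using pos_iff_ne_zero.2 hx₀)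
  refine ⟨t, ht0, fun i => (ht i).2, hU.tendsto_right_iff.2 fun n _ => ?_⟩
  filter_upwards [hs.eventually_gt_atTop n] with i hi
  exact Set.mem_iInter₂.1 (not_not.1 (ht i).1) n hi

theorem exists_strictMono_injective_subwalk {α : Type*} {t : ℕ → α}
    (ht : Tendsto t atTop cofinite) :
    ∃ τ : ℕ → ℕ, StrictMono τ ∧ t (τ 0) = t 0 ∧ (∀ k, t (τ (k + 1)) = t (τ k + 1)) ∧
      Function.Injective (t ∘ τ) := by
  have hlast : ∀ i, ∃ j, t j = t i ∧ ∀ k, t k = t i → k ≤ j := fun i => by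
    have hfin : {j | t j = t i}.Finite := by
      have hne := ht.eventually (eventually_cofinite_ne (t i))
      simpa only [← Nat.cofinite_eq_atTop, eventually_cofinite, not_not] using hne
    exact Set.exists_max_image _ id hfin ⟨i, rfl⟩
  choose last hlast_eq hle_last using hlast
  let τ : ℕ → ℕ := fun k => (fun i => last (i + 1))^[k] (last 0)
  have hτ : ∀ k, τ (k + 1) = last (τ k + 1) := fun k => Function.iterate_succ_apply' _ _ _
  have hmono : StrictMono τ := strictMono_nat_of_lt_succ fun k =>
    hτ k ▸ hle_last (τ k + 1) (τ k + 1) rfl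
  have hmax : ∀ k j, t j = t (τ k) → j ≤ τ k
    | 0, j, hj => hle_last 0 j (hj.trans (hlast_eq 0))
    | k + 1, j, hj => by
      rw [hτ] at hj ⊢
      exact hle_last _ j (hj.trans (hlast_eq _))
  refine ⟨τ, hmono, hlast_eq 0, fun k => by rw [hτ, hlast_eq], fun i j hij => ?_⟩
  exact hmono.injective ((hmax j _ hij).antisymm (hmax i _ hij.symm))

theorem IsMinimalHarmonic.exists_injective_walk_tendsto_green_div [Countable V] [DecidableEq V]
    (hψ : IsMinimalHarmonic B ψ) (hgreen : ∀ v w, green B v w ≠ ⊤) {u : V} (hu : ψ u ≠ 0) :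
    ∃ t : ℕ → V, t 0 = u ∧ (∀ i, B (t i) (t (i + 1)) ≠ 0) ∧ Function.Injective t ∧
      ∀ v, Tendsto (fun k => green B v (t k) / green B u (t k)) atTop (nhds (ψ v / ψ u)) := by
  let l : Filter V :=
    cofinite ⊓ ⨅ v, comap (fun w => green B v w / green B u w) (nhds (ψ v / ψ u))
  have hl : fineFilter B ψ ≤ l := le_inf (fineFilter_le_cofinite hψ.ne_top hgreen)
    (le_iInf fun v => tendsto_iff_comap.1 (hψ.tendsto_green_div hgreen u v hu))
  have : (cofinite : Filter V).IsCountablyGenerated :=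
    HasCountableBasis.isCountablyGenerated ⟨hasBasis_cofinite, Set.Countable.ofPred_finite⟩
  obtain ⟨t, ht0, hedge, ht⟩ := exists_walk_tendsto hψ.matOp_eq hl hu
  obtain ⟨τ, hτ, hτ0, hτsucc, hinj⟩ :=
    exists_strictMono_injective_subwalk (ht.mono_right inf_le_left)
  refine ⟨t ∘ τ, hτ0.trans ht0, fun i => ?_, hinj, fun v => ?_⟩
  · simpa only [Function.comp_apply, hτsucc] using hedge (τ i)
  · have hlv : Tendsto (fun w => green B v w / green B u w) l (nhds (ψ v / ψ u)) :=
      tendsto_iff_comap.2 (inf_le_right.trans (iInf_le _ v))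
    exact (hlv.comp ht).comp hτ.tendsto_atTop

end Walk

/-- If `h ≤ ψ` is harmonic and `h' = ψ - h`, then `ψ` is the midpoint of the harmonic vectors
`h v₀ • ψ + h'` and `h' v₀ • ψ + h`, both normalised because `h v₀ + h' v₀ = 1`. -/
theorem isMinimalHarmonic_of_mem_extremePoints {B : V → V → ℝ≥0∞} {ψ : V → ℝ≥0∞} {v₀ : V}
    (hext : ψ ∈ Set.extremePoints ℝ≥0∞ {ξ | matOp B ξ = ξ ∧ (∀ v, ξ v ≠ ⊤) ∧ ξ v₀ = 1}) :
    IsMinimalHarmonic B ψ := by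
  obtain ⟨⟨hψ, hfin, hψ0⟩, hext⟩ := hext
  refine ⟨hψ, hfin, fun h hh hle => ⟨h v₀, ?_⟩⟩
  have hhfin : ∀ v, h v ≠ ⊤ := fun v => ne_top_of_le_ne_top (hfin v) (hle v)
  set h' := ψ - h
  have hsum : h + h' = ψ := add_tsub_cancel_of_le hle
  have hsum0 : h v₀ + h' v₀ = 1 := by rw [← Pi.add_apply, hsum, hψ0]
  have hh' : matOp B h' = h' := by rw [map_tsub_of_ne_top _ hle (by rwa [hh]), hψ, hh]
  have hh'fin : ∀ v, h' v ≠ ⊤ := fun v => ne_top_of_le_ne_top (hfin v) tsub_le_self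
  have hmem : ∀ (f : V → ℝ≥0∞) (a : ℝ≥0∞), matOp B f = f → (∀ v, f v ≠ ⊤) → a + f v₀ = 1 →
      a • ψ + f ∈ {ξ | matOp B ξ = ξ ∧ (∀ v, ξ v ≠ ⊤) ∧ ξ v₀ = 1} := by
    intro f a hf hffin haf
    have ha : a ≠ ⊤ := ne_top_of_le_ne_top ENNReal.one_ne_top (haf ▸ le_self_add)
    refine ⟨by rw [map_add, map_smul, hψ, hf], fun v => ?_, by simpa [hψ0] using haf⟩
    exact ENNReal.add_ne_top.2 ⟨ENNReal.mul_ne_top ha (hfin v), hffin v⟩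
  have hmid : (2⁻¹ : ℝ≥0∞) • (h v₀ • ψ + h') + (2⁻¹ : ℝ≥0∞) • (h' v₀ • ψ + h) = ψ :=
    calc
      _ = (2⁻¹ : ℝ≥0∞) • ((h v₀ + h' v₀) • ψ + (h + h')) := by
        simp only [add_smul, smul_add]
        abel
      _ = ψ := by
        rw [hsum0, hsum, one_smul, smul_add, ← add_smul, ENNReal.inv_two_add_inv_two, one_smul]
  have heq : h v₀ • ψ + h' = ψ := hext (hmem h' _ hh' hh'fin hsum0)
    (hmem h _ hh hhfin ((add_comm _ _).trans hsum0))
    ⟨2⁻¹, 2⁻¹, by simp, by simp, ENNReal.inv_two_add_inv_two, hmid⟩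
  ext v
  exact (ENNReal.add_left_inj (hh'fin v)).1 (congrFun (hsum.trans heq.symm) v)

section Harmonic

variable {A : V → V → ℝ≥0∞} {β : ℝ} {ξ : V → ℝ≥0∞}

theorem IsHarmonic.isAlmostHarmonic (h : IsHarmonic A β ξ) : IsAlmostHarmonic A β ξ :=
  ⟨h.1, fun v _ => h.2 v, fun v _ => (h.2 v).le⟩

theorem expb_ne_zero (β : ℝ) : expb β ≠ 0 := by simp [expb, Real.exp_pos]

theorem expb_ne_top (β : ℝ) : expb β ≠ ⊤ := ENNReal.ofReal_ne_top

theorem expn_eq_inv_expb_pow (β : ℝ) (n : ℕ) : expn β n = (expb β)⁻¹ ^ n := by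
  rw [expn, expb, ← ENNReal.ofReal_inv_of_pos (Real.exp_pos β), ← Real.exp_neg,
    ← ENNReal.ofReal_pow (Real.exp_pos _).le, ← Real.exp_nat_mul, neg_mul_comm]

theorem isHarmonic_iff_matOp_eq :
    IsHarmonic A β ξ ↔ (∀ v, ξ v ≠ ⊤) ∧ matOp ((expb β)⁻¹ • A) ξ = ξ := by
  refine and_congr_right fun _ => ?_
  rw [matOp_smul_matrix, funext_iff]
  refine forall_congr' fun v => ?_
  rw [LinearMap.smul_apply, Pi.smul_apply, smul_eq_mul, matOp_apply, ← ENNReal.div_eq_inv_mul,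
    eq_comm (b := ξ v), ENNReal.eq_div_iff (expb_ne_zero β) (expb_ne_top β), eq_comm]

theorem Apow_eq_pow_matOp [DecidableEq V] (n : ℕ) (v w : V) :
    Apow A n v w = (matOp A ^ n) (Pi.single w 1) v := by
  induction n generalizing v with
  | zero => simp [Apow, Pi.single_apply]
  | succ n ih => simp only [Apow, ih, pow_succ', Module.End.mul_apply, matOp_apply]

theorem green_inv_expb_smul [DecidableEq V] (A : V → V → ℝ≥0∞) (β : ℝ) (v w : V) :
    green ((expb β)⁻¹ • A) v w = ∑' n, Apow A n v w * expn β n := by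
  simp only [green, potential, matOp_smul_matrix, smul_pow, LinearMap.smul_apply, Pi.smul_apply,
    smul_eq_mul, Apow_eq_pow_matOp, expn_eq_inv_expb_pow, mul_comm]

theorem mem_extremePoints_of_extremal {ψ : V → ℝ≥0∞} {v₀ : V} (hψ : IsHarmonic A β ψ)
    (hψ0 : ψ v₀ = 1)
    (hext : ∀ ξ η : V → ℝ≥0∞, IsAlmostHarmonic A β ξ → ξ v₀ = 1 →
      IsAlmostHarmonic A β η → η v₀ = 1 → ∀ t : ℝ, 0 < t → t < 1 →
      (∀ v, ψ v = ENNReal.ofReal t * ξ v + ENNReal.ofReal (1 - t) * η v) →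
      ξ = ψ ∧ η = ψ) :
    ψ ∈ Set.extremePoints ℝ≥0∞
      {ξ | matOp ((expb β)⁻¹ • A) ξ = ξ ∧ (∀ v, ξ v ≠ ⊤) ∧ ξ v₀ = 1} := by
  have hharm : ∀ {ξ : V → ℝ≥0∞}, matOp ((expb β)⁻¹ • A) ξ = ξ ∧ (∀ v, ξ v ≠ ⊤) ∧ ξ v₀ = 1 →
      IsAlmostHarmonic A β ξ := fun h =>
    (isHarmonic_iff_matOp_eq.2 ⟨h.2.1, h.1⟩).isAlmostHarmonic
  obtain ⟨hfin, heq⟩ := isHarmonic_iff_matOp_eq.1 hψ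
  refine ⟨⟨heq, hfin, hψ0⟩, fun ξ hξ η hη => ?_⟩
  rintro ⟨a, b, ha, hb, hab, rfl⟩
  have ha_top : a ≠ ⊤ := ne_top_of_le_ne_top ENNReal.one_ne_top (hab ▸ le_self_add)
  have hb_eq : b = 1 - a := ENNReal.eq_sub_of_add_eq ha_top (by rwa [add_comm])
  have ha1 : a < 1 := tsub_pos_iff_lt.1 (hb_eq ▸ hb)
  have hb_ofReal : ENNReal.ofReal (1 - a.toReal) = b := by
    rw [ENNReal.ofReal_sub _ ENNReal.toReal_nonneg, ENNReal.ofReal_one,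
      ENNReal.ofReal_toReal ha_top, hb_eq]
  refine (hext ξ η (hharm hξ) hξ.2.2 (hharm hη) hη.2.2 a.toReal
    (ENNReal.toReal_pos ha.ne' ha_top) ?_ fun v => ?_).1
  · simpa using ENNReal.toReal_strict_mono ENNReal.one_ne_top ha1
  · rw [ENNReal.ofReal_toReal ha_top, hb_ofReal]
    rfl

end Harmonic

theorem stmt19_general [Countable V] [DecidableEq V] (A : V → V → ℝ≥0∞)
    (β : ℝ) (htr : ∀ v w : V, ∑' n : ℕ, Apow A n v w * expn β n ≠ ⊤)
    (v₀ : V) (ψ : V → ℝ≥0∞) (hψ : IsHarmonic A β ψ) (hψ0 : ψ v₀ = 1)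
    (hext : ∀ ξ η : V → ℝ≥0∞, IsAlmostHarmonic A β ξ → ξ v₀ = 1 →
      IsAlmostHarmonic A β η → η v₀ = 1 → ∀ t : ℝ, 0 < t → t < 1 →
      (∀ v, ψ v = ENNReal.ofReal t * ξ v + ENNReal.ofReal (1 - t) * η v) →
      ξ = ψ ∧ η = ψ) :
    ∃ t : ℕ → V, t 0 = v₀ ∧ (∀ i : ℕ, A (t i) (t (i + 1)) ≠ 0) ∧ Function.Injective t ∧
      ∀ v : V, Filter.Tendsto
        (fun k : ℕ => (∑' n : ℕ, Apow A n v (t k) * expn β n) /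
          ∑' n : ℕ, Apow A n v₀ (t k) * expn β n)
        Filter.atTop (nhds (ψ v)) := by
  have hmin := isMinimalHarmonic_of_mem_extremePoints
    (mem_extremePoints_of_extremal hψ hψ0 hext)
  simp only [← green_inv_expb_smul] at htr ⊢
  obtain ⟨t, ht0, hedge, hinj, hlim⟩ :=
    hmin.exists_injective_walk_tendsto_green_div htr (u := v₀) (by simp [hψ0])
  refine ⟨t, ht0, fun i => right_ne_zero_of_mul (hedge i), hinj, fun v => ?_⟩
  simpa only [hψ0, div_one] using hlim v

/-- Under the standing assumptions, in the transient case, if `ψ` is a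
non-zero `β`-harmonic vector with `ψ_{v₀} = 1` which is extremal in `E(A,β)_{v₀}`, then
there is an infinite path `t` in `G` without repeated vertices, starting at `v₀`, such
that `ψ_v = lim_k (∑_n A^n_{v t_k} e^{-nβ}) / (∑_n A^n_{v₀ t_k} e^{-nβ})` for all `v`. -/
theorem stmt19 [Countable V] [DecidableEq V] (A : V → V → ℝ≥0∞)
    (hst : Standing A)
    (hiv : ∀ v ∈ NW A,
      Filter.limsup (fun n : ℕ => Apow A n v v ^ ((n : ℝ)⁻¹)) Filter.atTop ≠ ⊤)
    (β : ℝ) (htr : ∀ v w : V, ∑' n : ℕ, Apow A n v w * expn β n ≠ ⊤)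
    (v₀ : V) (ψ : V → ℝ≥0∞) (hψ : IsHarmonic A β ψ) (hψ0 : ψ v₀ = 1)
    (hext : ∀ ξ η : V → ℝ≥0∞, IsAlmostHarmonic A β ξ → ξ v₀ = 1 →
      IsAlmostHarmonic A β η → η v₀ = 1 → ∀ t : ℝ, 0 < t → t < 1 →
      (∀ v, ψ v = ENNReal.ofReal t * ξ v + ENNReal.ofReal (1 - t) * η v) →
      ξ = ψ ∧ η = ψ) :
    ∃ t : ℕ → V, t 0 = v₀ ∧ (∀ i : ℕ, A (t i) (t (i + 1)) ≠ 0) ∧ Function.Injective t ∧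
      ∀ v : V, Filter.Tendsto
        (fun k : ℕ => (∑' n : ℕ, Apow A n v (t k) * expn β n) /
          ∑' n : ℕ, Apow A n v₀ (t k) * expn β n)
        Filter.atTop (nhds (ψ v)) :=
  stmt19_general A β htr v₀ ψ hψ hψ0 hext
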